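/- arXiv:2605.10879 — 2 statements merged into one kernel-verified Lean document; each statement's English description precedes it below -/
import Mathlib

section
/- Converse part of Theorem 1 (path graph with modified-edge-server privacy): for every integer N ≥ 4 and every PIR scheme with path-graph storage on N servers and modified-edge-server privacy sets, the total download cost satisfies Σ_{k=1}^{N−1} D_k ≥ (2N−3)·L; equivalently, the rate satisfies R ≤ (N−1)/(2N−3). -/
/-!
Write `F T` for the joint entropy of a set `T` of the random variables of the scheme and
`f T = F (T ∪ 𝒬)`.  Both are monotone and submodular (`F_mono`, `F_submod`), and everything below
uses only these Shannon inequalities.  Put `h n θ k = H(A_n^{[θ]} | W_k, 𝒬)`.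

* `decode_bound`: given all messages except `W_k` and the queries, every answer except those of
  servers `k` and `k + 1` is known, so these two must supply the `L` units of `W_k`:
  `L ≤ h k k j + h (k+1) k j'` for all `j, j' ≠ k`.
* `download_bound`: the answers for index `k` reveal `W_k`, and given `W_k` the path splits into
  two independent halves, so `L + h l k k + h r k k ≤ D_k` whenever `l ≤ k < r`.

Write the second bound as `D_k ≥ L + λ_k + ρ_k`, with `λ_k = h k k k` and `ρ_k = h (k+1) k k` for
a generic `k`.  Privacy turns the first bound into `ρ_{k-1} + λ_{k+1} ≥ L` for `2 ≤ k ≤ N - 2`.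
At the ends, the modified privacy sets let index `1` be compared with index `2`: servers `1` and
`2` satisfy `h 1 2 2 + h 2 2 2 ≥ L`, so the better choice of `l` allows `λ_2 = L / 2`;
symmetrically `ρ_{N-2} = L / 2`, while `λ_1 = ρ_{N-1} = 0`.  Summing over `k` gives
`(N - 1) L + (N - 3) L + L / 2 + L / 2 = (2 N - 3) L`.
-/

/-!
Formalization of PIR with arbitrary privacy requirement sets.

A PIR scheme with `N` servers and `K` messages of equal length `L > 0` is modeled
by finitely-valued random variables on a common finite probability space:
messages `W 1, …, W K`, and for each server `n ∈ [1:N]` and desired index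
`k ∈ [1:K]`, a query `Q n k` and an answer `A n k`.  Shannon entropy,
conditional entropy and (conditional) mutual information are defined from the
probability mass function `p`.
-/

open scoped Classical BigOperators

noncomputable section

/-- A PIR scheme: a finite probability space together with the message, query and
answer random variables.  Only the variables indexed by `n ∈ [1:N]`, `k ∈ [1:K]`
are meaningful; all random variables are finitely valued (`ℕ`-valued on a finite
sample space). -/
structure PIRScheme (N K : ℕ) (L : ℝ) where
  /-- the sample space -/
  Ω : Type
  [fin : Fintype Ω]
  /-- the probability mass function -/
  p : Ω → ℝ
  p_nonneg : ∀ ω, 0 ≤ p ω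
  p_sum : ∑ ω : Ω, p ω = 1
  /-- the messages `W i`, `i ∈ [1:K]` -/
  W : ℕ → Ω → ℕ
  /-- `Q n k` is the query sent to server `n` when retrieving message `k` -/
  Q : ℕ → ℕ → Ω → ℕ
  /-- `A n k` is the answer of server `n` when retrieving message `k` -/
  A : ℕ → ℕ → Ω → ℕ

attribute [instance] PIRScheme.fin

namespace PIRScheme

variable {N K : ℕ} {L : ℝ} (S : PIRScheme N K L)

/-- `P[X = v]`. -/
def prob {α : Type*} (X : S.Ω → α) (v : α) : ℝ :=
  ∑ ω : S.Ω, if X ω = v then S.p ω else 0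

/-- Shannon entropy `H(X)`. -/
def H {α : Type*} (X : S.Ω → α) : ℝ :=
  - ∑ ω : S.Ω, S.p ω * Real.log (S.prob X (X ω))

/-- Conditional entropy `H(X | Y) := H(X, Y) - H(Y)`. -/
def Hc {α β : Type*} (X : S.Ω → α) (Y : S.Ω → β) : ℝ :=
  S.H (fun ω => (X ω, Y ω)) - S.H Y

/-- Mutual information `I(X ; Y) := H(X) + H(Y) - H(X, Y)`. -/
def MI {α β : Type*} (X : S.Ω → α) (Y : S.Ω → β) : ℝ :=
  S.H X + S.H Y - S.H (fun ω => (X ω, Y ω))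

/-- Conditional mutual information `I(X ; Y | Z) := H(X|Z) + H(Y|Z) - H(X,Y|Z)`. -/
def MIc {α β γ : Type*} (X : S.Ω → α) (Y : S.Ω → β) (Z : S.Ω → γ) : ℝ :=
  S.Hc X Z + S.Hc Y Z - S.Hc (fun ω => (X ω, Y ω)) Z

/-- The joint random variable `(W j)_{j ∈ T}` of a subcollection of the messages. -/
def jointW (T : Finset ℕ) : S.Ω → (T → ℕ) := fun ω j => S.W j ω

/-- The joint random variable of all `K` messages. -/
def allW : S.Ω → (Finset.Icc 1 K → ℕ) := S.jointW (Finset.Icc 1 K)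

/-- `𝒬`: the tuple of all queries `Q n k`, `n ∈ [1:N]`, `k ∈ [1:K]`. -/
def allQ : S.Ω → ((Finset.Icc 1 N ×ˢ Finset.Icc 1 K : Finset (ℕ × ℕ)) → ℕ) :=
  fun ω x => S.Q x.1.1 x.1.2 ω

/-- The tuple of answers `(A 1 k, …, A N k)` when retrieving message `k`. -/
def ansVec (k : ℕ) : S.Ω → (Finset.Icc 1 N → ℕ) := fun ω n => S.A n k ω

/-- The download cost `D k := ∑_{n=1}^N H(A n k)`. -/
def D (k : ℕ) : ℝ := ∑ n ∈ Finset.Icc 1 N, S.H (S.A n k)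

/-- The rate `R := K ⬝ L / ∑_{k=1}^K D k`. -/
def rate : ℝ := (K * L) / ∑ k ∈ Finset.Icc 1 K, S.D k

/-- Validity of a PIR scheme with respect to storage index sets `I n` and privacy
requirement sets `P n`:
(messages) the messages each have entropy `L` and are mutually independent;
(i) the messages are independent of all the queries;
(ii) each answer is a function of the server's storage and received query;
(iii) privacy: for all `θ1, θ2 ∈ P n` and every subcollection `T` of the messages,
  the answer of server `n` has the same conditional entropy whether `θ1` or `θ2`
  is being retrieved;
(iv) decodability: message `k` is determined by all the answers and the queries. -/
structure IsValid (S : PIRScheme N K L) (I P : ℕ → Finset ℕ) : Prop where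
  msg_entropy : ∀ i ∈ Finset.Icc 1 K, S.H (S.W i) = L
  msg_indep : S.H S.allW = ∑ i ∈ Finset.Icc 1 K, S.H (S.W i)
  stor_sub_priv : ∀ n ∈ Finset.Icc 1 N, I n ⊆ P n
  priv_sub : ∀ n ∈ Finset.Icc 1 N, P n ⊆ Finset.Icc 1 K
  query_indep : S.MI S.allW S.allQ = 0
  ans_det : ∀ n ∈ Finset.Icc 1 N, ∀ k ∈ Finset.Icc 1 K,
    S.Hc (S.A n k) (fun ω => (S.jointW (I n) ω, S.Q n k ω)) = 0
  privacy : ∀ n ∈ Finset.Icc 1 N, ∀ θ1 ∈ P n, ∀ θ2 ∈ P n, ∀ T ⊆ Finset.Icc 1 K,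
    S.Hc (S.A n θ1) (fun ω => (S.jointW T ω, S.allQ ω)) =
      S.Hc (S.A n θ2) (fun ω => (S.jointW T ω, S.allQ ω))
  decodable : ∀ k ∈ Finset.Icc 1 K, S.Hc (S.W k) (fun ω => (S.ansVec k ω, S.allQ ω)) = 0

end PIRScheme

/-- Path-graph storage on `N` servers (`K = N - 1` messages):
`𝒲_1 = {W 1}`, `𝒲_n = {W (n-1), W n}` for `2 ≤ n ≤ N - 1`, `𝒲_N = {W (N-1)}`. -/
def pathIndex (N : ℕ) : ℕ → Finset ℕ := fun n =>
  if n = 1 then {1} else if n = N then {N - 1} else {n - 1, n}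

/-- Modified-edge-server privacy sets on the path graph:
`𝒫_1 = 𝒫_2 = {1, 2}`, `𝒫_N = 𝒫_{N-1} = {N-2, N-1}`, and `𝒫_n = {n-1, n}`
for `2 ≤ n ≤ N - 1`. -/
def pathModEdgePriv (N : ℕ) : ℕ → Finset ℕ := fun n =>
  if n ≤ 2 then {1, 2} else if N - 1 ≤ n then {N - 2, N - 1} else {n - 1, n}

/-- The representative of `m` modulo `N` lying in `{1, …, N}` (so that index `0`
is identified with index `N`). -/
def cyc (N : ℕ) (m : ℤ) : ℕ := (((m - 1) % (N : ℤ)) + 1).toNat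

/-- Cyclic-graph storage on `N` servers (`K = N` messages):
`𝒲_n = {W (n-1), W n}` with indices mod `N`, i.e. `ℐ_n = {n - 1, n} (mod N)`. -/
def cycIndex (N : ℕ) : ℕ → Finset ℕ := fun n => {cyc N ((n : ℤ) - 1), cyc N (n : ℤ)}

/-- The cyclic interval `[a : a + len - 1]` of `len` consecutive indices mod `N`,
as a subset of `{1, …, N}`. -/
def cycInterval (N : ℕ) (a : ℤ) (len : ℕ) : Finset ℕ :=
  (Finset.range len).image fun j => cyc N (a + j)

/-! ### Entropy of sets of random variables -/

namespace PIRScheme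

/-- Names of the individual random variables of a scheme: messages, queries and answers. -/
inductive PVar : Type
  | W (i : ℕ)
  | Q (n k : ℕ)
  | A (n k : ℕ)

variable {N K : ℕ} {L : ℝ} (S : PIRScheme N K L)

/-- The random variable with a given name. -/
def val : PVar → S.Ω → ℕ
  | .W i => S.W i
  | .Q n k => S.Q n k
  | .A n k => S.A n k

/-- The sample points `a` and `b` agree on all variables named in `T`. -/
def Agree (T : Set PVar) (a b : S.Ω) : Prop := ∀ i ∈ T, S.val i a = S.val i b

/-- Joint entropy of the variables named in `T`. -/
def F (T : Set PVar) : ℝ := S.H (fun ω => fun i : T => S.val i ω)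

/-- Probability of the class of `ω` in the partition generated by the variables in `T`. -/
def cls (T : Set PVar) (ω : S.Ω) : ℝ := ∑ a : S.Ω, if S.Agree T a ω then S.p a else 0

variable {S} in
lemma Agree.symm {T : Set PVar} {a b : S.Ω} (h : S.Agree T a b) : S.Agree T b a :=
  fun i hi => (h i hi).symm

variable {S} in
lemma Agree.trans {T : Set PVar} {a b c : S.Ω} (h : S.Agree T a b) (h' : S.Agree T b c) :
    S.Agree T a c :=
  fun i hi => (h i hi).trans (h' i hi)

variable {S} in
lemma Agree.mono {T U : Set PVar} {a b : S.Ω} (h : S.Agree T a b) (hU : U ⊆ T) : S.Agree U a b :=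
  fun i hi => h i (hU hi)

variable {S} in
lemma Agree.union {T U : Set PVar} {a b : S.Ω} (h : S.Agree T a b) (h' : S.Agree U a b) :
    S.Agree (T ∪ U) a b :=
  fun i hi => hi.elim (h i) (h' i)

/-- Entropy depends only on the partition of the sample space. -/
lemma H_eq_F {α : Type*} (X : S.Ω → α) (T : Set PVar)
    (h : ∀ a b, X a = X b ↔ S.Agree T a b) : S.H X = S.F T := by
  unfold F H prob
  simp only [h, funext_iff, Subtype.forall]
  rfl

lemma F_eq (T : Set PVar) : S.F T = - ∑ ω : S.Ω, S.p ω * Real.log (S.cls T ω) := by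
  unfold F H prob cls Agree
  simp only [funext_iff, Subtype.forall]

lemma p_le_cls (T : Set PVar) (ω : S.Ω) : S.p ω ≤ S.cls T ω := by
  unfold cls
  have := Finset.single_le_sum (s := Finset.univ)
    (f := fun a => if S.Agree T a ω then S.p a else 0)
    (fun a _ => by split_ifs; exacts [S.p_nonneg a, le_rfl]) (Finset.mem_univ ω)
  simpa [Agree] using this

lemma cls_nonneg (T : Set PVar) (ω : S.Ω) : 0 ≤ S.cls T ω :=
  (S.p_nonneg ω).trans (S.p_le_cls T ω)

lemma cls_anti {T U : Set PVar} (h : T ⊆ U) (ω : S.Ω) : S.cls U ω ≤ S.cls T ω := by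
  unfold cls
  refine Finset.sum_le_sum fun a _ => ?_
  by_cases hU : S.Agree U a ω
  · simp [hU, hU.mono h]
  · simp only [hU, if_false]
    split_ifs
    exacts [S.p_nonneg a, le_rfl]

lemma cls_congr {T : Set PVar} {a b : S.Ω} (h : S.Agree T a b) : S.cls T a = S.cls T b := by
  unfold cls
  refine Finset.sum_congr rfl fun c _ => ?_
  have : S.Agree T c a ↔ S.Agree T c b := ⟨fun k => k.trans h, fun k => k.trans h.symm⟩
  simp [this]

lemma F_mono {T U : Set PVar} (h : T ⊆ U) : S.F T ≤ S.F U := by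
  rw [F_eq, F_eq, neg_le_neg_iff]
  refine Finset.sum_le_sum fun ω _ => ?_
  rcases (S.p_nonneg ω).eq_or_lt with h0 | h0
  · simp [← h0]
  · exact mul_le_mul_of_nonneg_left
      (Real.log_le_log (h0.trans_le (S.p_le_cls U ω)) (S.cls_anti h ω)) h0.le

lemma F_empty : S.F ∅ = 0 := by
  rw [F_eq]
  simp [cls, Agree, S.p_sum]

/-- Points all lying in one class of `T` contribute total weight at most `1` to `∑ p / cls T`;
a null class contributes `0` because `x / 0 = 0`. -/
lemma sum_class_le_one (T : Set PVar) (P : S.Ω → Prop)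
    (hP : ∀ a b, P a → P b → S.Agree T a b) :
    ∑ ω : S.Ω, (if P ω then S.p ω / S.cls T ω else 0) ≤ 1 := by
  by_cases hne : ∃ c, P c
  · obtain ⟨c, hc⟩ := hne
    have h1 : ∑ ω : S.Ω, (if P ω then S.p ω / S.cls T ω else 0)
        ≤ (∑ ω : S.Ω, if S.Agree T ω c then S.p ω else 0) / S.cls T c := by
      rw [Finset.sum_div]
      refine Finset.sum_le_sum fun ω _ => ?_
      by_cases hω : P ω
      · have := hP ω c hω hc
        simp [hω, this, S.cls_congr this]
      · simp only [hω, if_false]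
        split_ifs
        · exact div_nonneg (S.p_nonneg ω) (S.cls_nonneg T c)
        · simp
    exact h1.trans (div_self_le_one _)
  · push Not at hne
    simp [hne]

/-- The total-mass estimate behind submodularity. -/
lemma sum_ratio_le_one (T U : Set PVar) :
    ∑ ω : S.Ω, S.p ω *
      (S.cls T ω * S.cls U ω / (S.cls (T ∪ U) ω * S.cls (T ∩ U) ω)) ≤ 1 := by
  have e1 : ∀ ω, S.p ω * (S.cls T ω * S.cls U ω / (S.cls (T ∪ U) ω * S.cls (T ∩ U) ω)) =
      ∑ a : S.Ω, ∑ b : S.Ω, (if S.Agree T a ω ∧ S.Agree U b ω then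
        S.p a * S.p b / S.cls (T ∩ U) ω * (S.p ω / S.cls (T ∪ U) ω) else 0) := by
    intro ω
    have : S.cls T ω * S.cls U ω = ∑ a : S.Ω, ∑ b : S.Ω,
        (if S.Agree T a ω ∧ S.Agree U b ω then S.p a * S.p b else 0) := by
      conv_lhs => unfold cls
      rw [Finset.sum_mul_sum]
      refine Finset.sum_congr rfl fun a _ => Finset.sum_congr rfl fun b _ => ?_
      by_cases h1 : S.Agree T a ω <;> by_cases h2 : S.Agree U b ω <;> simp [h1, h2]
    rw [this, Finset.sum_div, Finset.mul_sum]
    refine Finset.sum_congr rfl fun a _ => ?_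
    rw [Finset.sum_div, Finset.mul_sum]
    refine Finset.sum_congr rfl fun b _ => ?_
    split_ifs
    · rw [div_mul_div_comm, mul_div_assoc', mul_comm (S.cls (T ∩ U) ω)]
      ring
    · simp
  simp_rw [e1]
  rw [Finset.sum_comm]
  calc _ ≤ ∑ a : S.Ω, S.p a := ?_
    _ = 1 := S.p_sum
  refine Finset.sum_le_sum fun a _ => ?_
  rw [Finset.sum_comm]
  have step : ∀ b, ∑ ω : S.Ω, (if S.Agree T a ω ∧ S.Agree U b ω then
        S.p a * S.p b / S.cls (T ∩ U) ω * (S.p ω / S.cls (T ∪ U) ω) else 0) ≤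
      S.p a / S.cls (T ∩ U) a * (if S.Agree (T ∩ U) b a then S.p b else 0) := by
    intro b
    have key : ∀ ω, S.Agree T a ω → S.Agree U b ω → S.Agree (T ∩ U) a ω ∧
        S.Agree (T ∩ U) b a := fun ω h1 h2 =>
      ⟨h1.mono Set.inter_subset_left,
        (h2.mono Set.inter_subset_right).trans (h1.mono Set.inter_subset_left).symm⟩
    by_cases hab : S.Agree (T ∩ U) b a
    · have hle := S.sum_class_le_one (T ∪ U) (fun ω => S.Agree T a ω ∧ S.Agree U b ω)
        (fun x y hx hy => (hx.1.symm.trans hy.1).union (hx.2.symm.trans hy.2))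
      have hc : 0 ≤ S.p a * S.p b / S.cls (T ∩ U) a :=
        div_nonneg (mul_nonneg (S.p_nonneg a) (S.p_nonneg b)) (S.cls_nonneg _ _)
      have := mul_le_mul_of_nonneg_left hle hc
      rw [Finset.mul_sum] at this
      rw [if_pos hab]
      calc _ = _ := Finset.sum_congr rfl fun ω _ => ?_
        _ ≤ _ := this
        _ = _ := by ring
      by_cases h : S.Agree T a ω ∧ S.Agree U b ω
      · simp only [h, and_self, if_true]
        rw [S.cls_congr (key ω h.1 h.2).1]
      · simp [h]
    · rw [if_neg hab, mul_zero]
      refine (Finset.sum_eq_zero fun ω _ => ?_).le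
      rw [if_neg]
      exact fun h => hab (key ω h.1 h.2).2
  refine (Finset.sum_le_sum fun b _ => step b).trans ?_
  rw [← Finset.mul_sum]
  change S.p a / S.cls (T ∩ U) a * S.cls (T ∩ U) a ≤ S.p a
  rcases (S.cls_nonneg (T ∩ U) a).eq_or_lt with h0 | h0
  · rw [← h0]; simpa using S.p_nonneg a
  · rw [div_mul_cancel₀ _ h0.ne']

/-- Submodularity of entropy, from `log t ≤ t - 1`. -/
lemma F_submod (T U : Set PVar) : S.F (T ∪ U) + S.F (T ∩ U) ≤ S.F T + S.F U := by
  have h : ∑ ω : S.Ω, (S.p ω * Real.log (S.cls T ω) + S.p ω * Real.log (S.cls U ω)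
      - S.p ω * Real.log (S.cls (T ∪ U) ω) - S.p ω * Real.log (S.cls (T ∩ U) ω)) ≤
      ∑ ω : S.Ω, (S.p ω *
        (S.cls T ω * S.cls U ω / (S.cls (T ∪ U) ω * S.cls (T ∩ U) ω)) - S.p ω) := by
    refine Finset.sum_le_sum fun ω _ => ?_
    rcases (S.p_nonneg ω).eq_or_lt with h0 | h0
    · simp [← h0]
    · have h1 := h0.trans_le (S.p_le_cls T ω)
      have h2 := h0.trans_le (S.p_le_cls U ω)
      have h3 := h0.trans_le (S.p_le_cls (T ∪ U) ω)
      have h4 := h0.trans_le (S.p_le_cls (T ∩ U) ω)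
      have := Real.log_le_sub_one_of_pos (div_pos (mul_pos h1 h2) (mul_pos h3 h4))
      rw [Real.log_div (mul_pos h1 h2).ne' (mul_pos h3 h4).ne', Real.log_mul h1.ne' h2.ne',
        Real.log_mul h3.ne' h4.ne'] at this
      nlinarith [mul_le_mul_of_nonneg_left this h0.le]
  have h' := S.sum_ratio_le_one T U
  simp only [Finset.sum_sub_distrib, Finset.sum_add_distrib, S.p_sum] at h
  simp only [F_eq]
  linarith

/-- Submodularity in the form `H(X,Y,C) + H(C) ≤ H(X,C) + H(Y,C)`. -/
lemma F_submod' {B C T U : Set PVar} (hB : B ⊆ T ∪ U) (hT : C ⊆ T) (hU : C ⊆ U) :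
    S.F B + S.F C ≤ S.F T + S.F U :=
  (add_le_add (S.F_mono hB) (S.F_mono (Set.subset_inter hT hU))).trans (S.F_submod T U)

/-! ### Consequences of submodularity -/

lemma F_subadd {B T U : Set PVar} (hB : B ⊆ T ∪ U) : S.F B ≤ S.F T + S.F U := by
  have := S.F_submod' hB (Set.empty_subset T) (Set.empty_subset U)
  rwa [F_empty, add_zero] at this

lemma F_image_le_sum (g : ℕ → PVar) (T : Finset ℕ) :
    S.F (g '' T) ≤ ∑ i ∈ T, S.F {g i} := by
  induction T using Finset.induction_on with
  | empty => simp [F_empty]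
  | insert a T ha ih =>
    rw [Finset.sum_insert ha]
    refine (S.F_subadd (T := {g a}) (U := g '' T) ?_).trans (by linarith)
    rw [Finset.coe_insert, Set.image_insert_eq]
    exact fun x hx => hx

/-- A variable that is a function of `B` is a function of every larger collection. -/
lemma det_mono {B C X : Set PVar} (h : S.F (B ∪ X) = S.F B) (hBC : B ⊆ C) :
    S.F (C ∪ X) = S.F C := by
  have := S.F_submod' (B := C ∪ X) (C := B) (T := C) (U := B ∪ X)
    (Set.union_subset Set.subset_union_left
      (Set.subset_union_right.trans Set.subset_union_right)) hBC Set.subset_union_left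
  have := S.F_mono (Set.subset_union_left (s := C) (t := X))
  linarith

lemma det_image (g : ℕ → PVar) (T : Finset ℕ) (B : Set PVar)
    (h : ∀ i ∈ T, S.F (B ∪ {g i}) = S.F B) : S.F (B ∪ g '' T) = S.F B := by
  induction T using Finset.induction_on with
  | empty => simp
  | insert a T ha ih =>
    have h1 := ih fun i hi => h i (Finset.mem_insert_of_mem hi)
    have h2 := S.det_mono (h a (Finset.mem_insert_self a T))
      (Set.subset_union_left (s := B) (t := g '' T))
    rw [← h1, ← h2, Finset.coe_insert, Set.image_insert_eq]
    congr 1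
    ext x
    simp only [Set.mem_union, Set.mem_insert_iff, Set.mem_singleton_iff]
    tauto

/-- Data processing: if `U` and `V` are conditionally independent given `C`, then so are a
function `X` of `U` and a function `Y` of `V`. -/
lemma cond_indep {U V C X Y : Set PVar} (hCU : C ⊆ U) (hCV : C ⊆ V)
    (hind : S.F U + S.F V ≤ S.F (U ∪ V) + S.F C)
    (hX : S.F (U ∪ X) = S.F U) (hY : S.F (V ∪ Y) = S.F V) :
    S.F (C ∪ X) + S.F (C ∪ Y) ≤ S.F (C ∪ X ∪ Y) + S.F C := by
  have h1 := S.F_submod' (B := U ∪ V) (C := C ∪ Y) (T := U ∪ Y) (U := V ∪ Y)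
    (by intro x; simp only [Set.mem_union]; tauto) (Set.union_subset_union_left Y hCU)
    (Set.union_subset_union_left Y hCV)
  have h2 := S.F_submod' (B := U ∪ Y) (C := C ∪ X) (T := U ∪ X) (U := C ∪ X ∪ Y)
    (by intro x; simp only [Set.mem_union]; tauto) (Set.union_subset_union_left X hCU)
    Set.subset_union_left
  linarith

/-! ### The hypotheses in terms of joint entropies -/

/-- The names of all queries. -/
def qs (N K : ℕ) : Set PVar :=
  {x | ∃ n k, n ∈ Finset.Icc 1 N ∧ k ∈ Finset.Icc 1 K ∧ x = .Q n k}

/-- Joint entropy of the variables in `T` together with all queries. -/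
def f (T : Set PVar) : ℝ := S.F (T ∪ qs N K)

/-- `H(A_n^{[θ]} | W_k, 𝒬)`. -/
def h (n θ k : ℕ) : ℝ := S.f {.W k, .A n θ} - S.f {.W k}

lemma allQ_iff (a b : S.Ω) : S.allQ a = S.allQ b ↔ S.Agree (qs N K) a b := by
  simp only [allQ, funext_iff, Subtype.forall, Prod.forall, Finset.mem_product, Agree, qs]
  constructor
  · rintro h _ ⟨n, k, hn, hk, rfl⟩
    exact h n k ⟨hn, hk⟩
  · intro h n k ⟨hn, hk⟩
    exact h (.Q n k) ⟨n, k, hn, hk, rfl⟩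

lemma jointW_iff (T : Finset ℕ) (a b : S.Ω) :
    S.jointW T a = S.jointW T b ↔ S.Agree (PVar.W '' T) a b := by
  simp [jointW, funext_iff, Agree, val]

lemma ansVec_iff (k : ℕ) (a b : S.Ω) :
    S.ansVec k a = S.ansVec k b ↔
      S.Agree ((fun n => PVar.A n k) '' (Finset.Icc 1 N : Finset ℕ)) a b := by
  simp only [ansVec, funext_iff, Subtype.forall, Agree, Set.forall_mem_image, val,
    Finset.mem_coe]

lemma agree_union_iff (T U : Set PVar) (a b : S.Ω) :
    S.Agree (T ∪ U) a b ↔ S.Agree T a b ∧ S.Agree U a b :=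
  ⟨fun h => ⟨h.mono Set.subset_union_left, h.mono Set.subset_union_right⟩,
    fun h => h.1.union h.2⟩

lemma agree_singleton_iff (i : PVar) (a b : S.Ω) :
    S.Agree {i} a b ↔ S.val i a = S.val i b := by
  simp [Agree]

lemma Hc_ans (n θ k : ℕ) :
    S.Hc (S.A n θ) (fun ω => (S.jointW {k} ω, S.allQ ω)) = S.h n θ k := by
  unfold Hc h f
  rw [S.H_eq_F _ ({.W k, .A n θ} ∪ qs N K), S.H_eq_F _ ({.W k} ∪ qs N K)]
  · intro a b
    simp only [Prod.mk.injEq, jointW_iff, allQ_iff, agree_union_iff, Finset.coe_singleton,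
      Set.image_singleton]
  · intro a b
    rw [Set.insert_eq]
    simp only [Prod.mk.injEq, jointW_iff, allQ_iff, agree_union_iff, agree_singleton_iff, val,
      Finset.coe_singleton, Set.image_singleton]
    tauto

lemma h_nonneg (n θ k : ℕ) : 0 ≤ S.h n θ k := by
  unfold h f
  have := S.F_mono (T := {.W k} ∪ qs N K) (U := {.W k, .A n θ} ∪ qs N K)
    (Set.union_subset_union_left _ (by simp))
  linarith

variable {S} {I P : ℕ → Finset ℕ}

lemma IsValid.F_W (hS : S.IsValid I P) {i : ℕ} (hi : i ∈ Finset.Icc 1 K) :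
    S.F {.W i} = L := by
  refine Eq.trans (S.H_eq_F _ _ fun a b => ?_).symm (hS.msg_entropy i hi)
  simp [agree_singleton_iff, val]

lemma IsValid.F_W_le (hS : S.IsValid I P) {T : Finset ℕ} (hT : T ⊆ Finset.Icc 1 K) :
    S.F (PVar.W '' T) ≤ T.card * L := by
  refine (S.F_image_le_sum PVar.W T).trans (le_of_eq ?_)
  rw [Finset.sum_congr rfl fun i hi => hS.F_W (hT hi)]
  simp

lemma IsValid.f_allW (hS : S.IsValid I P) :
    S.f (PVar.W '' (Finset.Icc 1 K : Finset ℕ)) = K * L + S.F (qs N K) := by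
  have h1 := hS.query_indep
  have h2 := hS.msg_indep
  rw [Finset.sum_congr rfl hS.msg_entropy] at h2
  unfold MI at h1
  rw [h2, S.H_eq_F _ (qs N K) S.allQ_iff,
    S.H_eq_F (fun ω => (S.allW ω, S.allQ ω))
      (PVar.W '' (Finset.Icc 1 K : Finset ℕ) ∪ qs N K)] at h1
  · unfold f
    simp only [Finset.sum_const, Nat.card_Icc, Nat.add_sub_cancel, nsmul_eq_mul] at h1
    linarith
  · intro a b
    simp only [Prod.mk.injEq, allW, jointW_iff, allQ_iff, agree_union_iff]

/-- Any subcollection of the messages is independent of the queries and has entropy `|T| L`; the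
lower bound comes from `f_allW` by removing the other messages. -/
lemma IsValid.f_W (hS : S.IsValid I P) {T : Finset ℕ} (hT : T ⊆ Finset.Icc 1 K) :
    S.f (PVar.W '' T) = T.card * L + S.F (qs N K) := by
  apply le_antisymm
  · exact (S.F_subadd subset_rfl).trans (by linarith [hS.F_W_le hT])
  · have h1 := hS.f_allW
    have h2 := hS.F_W_le (T := Finset.Icc 1 K \ T) Finset.sdiff_subset
    have h3 : S.f (PVar.W '' (Finset.Icc 1 K : Finset ℕ)) ≤
        S.F (PVar.W '' (Finset.Icc 1 K \ T : Finset ℕ)) + S.f (PVar.W '' T) := by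
      refine S.F_subadd ?_
      rw [← Set.union_assoc, ← Set.image_union, ← Finset.coe_union,
        Finset.sdiff_union_of_subset hT]
    rw [Finset.card_sdiff_of_subset hT, Nat.cast_sub (Finset.card_le_card hT)] at h2
    simp only [Nat.card_Icc, Nat.add_sub_cancel] at h2
    linarith

lemma IsValid.f_W_single (hS : S.IsValid I P) {k : ℕ} (hk : k ∈ Finset.Icc 1 K) :
    S.f {.W k} = L + S.F (qs N K) := by
  have := hS.f_W (T := {k}) (by simpa using hk)
  simpa using this

/-- An answer is determined by any collection containing the server's storage and all queries. -/
lemma IsValid.det (hS : S.IsValid I P) {n k : ℕ} (hn : n ∈ Finset.Icc 1 N)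
    (hk : k ∈ Finset.Icc 1 K) {C : Set PVar} (hC : PVar.W '' (I n) ⊆ C) (hQ : qs N K ⊆ C) :
    S.F (C ∪ {.A n k}) = S.F C := by
  have h1 := hS.ans_det n hn k hk
  unfold Hc at h1
  rw [S.H_eq_F _ ((PVar.W '' (I n) ∪ {.Q n k}) ∪ {.A n k}),
    S.H_eq_F _ (PVar.W '' (I n) ∪ {.Q n k})] at h1
  · refine S.det_mono (B := PVar.W '' (I n) ∪ {.Q n k}) (by linarith) ?_
    refine Set.union_subset hC (Set.singleton_subset_iff.2 (hQ ⟨n, k, hn, hk, rfl⟩))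
  · intro a b
    simp only [Prod.mk.injEq, jointW_iff, agree_union_iff, agree_singleton_iff, val]
  · intro a b
    simp only [Prod.mk.injEq, jointW_iff, agree_union_iff, agree_singleton_iff, val]
    tauto

/-- The names of the answers given when message `k` is retrieved. -/
def ans (N k : ℕ) : Set PVar := (fun n => PVar.A n k) '' (Finset.Icc 1 N : Finset ℕ)

lemma IsValid.dec (hS : S.IsValid I P) {k : ℕ} (hk : k ∈ Finset.Icc 1 K) :
    S.F ((ans N k ∪ qs N K) ∪ {.W k}) = S.F (ans N k ∪ qs N K) := by
  have h1 := hS.decodable k hk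
  unfold Hc at h1
  rw [S.H_eq_F _ ((ans N k ∪ qs N K) ∪ {.W k}), S.H_eq_F _ (ans N k ∪ qs N K)] at h1
  · linarith
  · intro a b
    simp only [ans, Prod.mk.injEq, ansVec_iff, allQ_iff, agree_union_iff]
  · intro a b
    simp only [ans, Prod.mk.injEq, ansVec_iff, allQ_iff, agree_union_iff, agree_singleton_iff,
      val]
    tauto

lemma IsValid.h_privacy (hS : S.IsValid I P) {n θ1 θ2 k : ℕ} (hn : n ∈ Finset.Icc 1 N)
    (h1 : θ1 ∈ P n) (h2 : θ2 ∈ P n) (hk : k ∈ Finset.Icc 1 K) :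
    S.h n θ1 k = S.h n θ2 k := by
  rw [← Hc_ans, ← Hc_ans]
  exact hS.privacy n hn θ1 h1 θ2 h2 {k} (by simpa using hk)

lemma ans_le_D (k : ℕ) : S.F (ans N k) ≤ S.D k := by
  refine (S.F_image_le_sum (fun n => PVar.A n k) (Finset.Icc 1 N)).trans (le_of_eq ?_)
  refine Finset.sum_congr rfl fun n _ => ?_
  exact (S.H_eq_F _ _ fun a b => by simp [agree_singleton_iff, val]).symm

/-! ### The two bounds -/

/-- Servers `s` and `t` are the only ones storing `W k`; what they say about `W k` given the other
messages is at most what each says given one other message. -/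
lemma IsValid.decode_bound (hS : S.IsValid I P) {k s t j j' : ℕ} (hk : k ∈ Finset.Icc 1 K)
    (hI : ∀ n ∈ Finset.Icc 1 N, I n ⊆ Finset.Icc 1 K)
    (hst : ∀ n ∈ Finset.Icc 1 N, k ∈ I n → n = s ∨ n = t)
    (hj : j ∈ Finset.Icc 1 K) (hj' : j' ∈ Finset.Icc 1 K) (hjk : j ≠ k) (hjk' : j' ≠ k) :
    L ≤ S.h s k j + S.h t k j' := by
  set M : Set PVar := PVar.W '' ((Finset.Icc 1 K).erase k : Finset ℕ) with hM
  set Z : Set PVar := qs N K with hZ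
  set B : Set PVar := M ∪ Z ∪ {.A s k} ∪ {.A t k} with hB
  have memM : ∀ i ∈ Finset.Icc 1 K, i ≠ k → PVar.W i ∈ M := fun i hi hne =>
    ⟨i, Finset.mem_coe.2 (Finset.mem_erase.2 ⟨hne, hi⟩), rfl⟩
  have hdet : S.F (B ∪ ans N k) = S.F B := by
    refine S.det_image _ _ _ fun n hn => ?_
    by_cases hkn : k ∈ I n
    · congr 1
      apply Set.union_eq_self_of_subset_right
      rcases hst n hn hkn with rfl | rfl <;> simp [hB]
    · refine hS.det hn hk ?_ ?_
      · rintro _ ⟨i, hi, rfl⟩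
        refine Or.inl (Or.inl (Or.inl (memM i (hI n hn hi) ?_)))
        rintro rfl
        exact hkn hi
      · exact fun x hx => Or.inl (Or.inl (Or.inr hx))
  have hdec : S.F (B ∪ ans N k ∪ {.W k}) = S.F (B ∪ ans N k) := by
    refine S.det_mono (hS.dec hk) ?_
    rintro x (hx | hx)
    exacts [Or.inr hx, Or.inl (Or.inl (Or.inl (Or.inr hx)))]
  have hall : S.f (PVar.W '' (Finset.Icc 1 K : Finset ℕ)) ≤ S.F (B ∪ ans N k ∪ {.W k}) := by
    refine S.F_mono ?_
    rintro x (⟨i, hi, rfl⟩ | hx)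
    · by_cases hik : i = k
      · subst hik; exact Or.inr rfl
      · exact Or.inl (Or.inl (Or.inl (Or.inl (Or.inl (memM i hi hik)))))
    · exact Or.inl (Or.inl (Or.inl (Or.inl (Or.inr hx))))
  have h1 : S.F (M ∪ Z ∪ {.A s k}) + S.f {.W j} ≤ S.F (M ∪ Z) + S.f {.W j, .A s k} := by
    refine S.F_submod' ?_ ?_ ?_
    · intro x; simp only [Set.mem_union, Set.mem_insert_iff, Set.mem_singleton_iff]; tauto
    · rintro x (rfl | hx)
      exacts [Or.inl (memM j hj hjk), Or.inr hx]
    · intro x; simp only [Set.mem_union, Set.mem_insert_iff, Set.mem_singleton_iff]; tauto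
  have h2 : S.F B + S.f {.W j'} ≤ S.F (M ∪ Z ∪ {.A s k}) + S.f {.W j', .A t k} := by
    refine S.F_submod' ?_ ?_ ?_
    · intro x; simp only [hB, Set.mem_union, Set.mem_insert_iff, Set.mem_singleton_iff]; tauto
    · rintro x (rfl | hx)
      exacts [Or.inl (Or.inl (memM j' hj' hjk')), Or.inl (Or.inr hx)]
    · intro x; simp only [Set.mem_union, Set.mem_insert_iff, Set.mem_singleton_iff]; tauto
  have h3 : S.F (M ∪ Z) = ((Finset.Icc 1 K).erase k).card * L + S.F (qs N K) :=
    hS.f_W (Finset.erase_subset _ _)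
  have h4 := hS.f_allW
  have hK : 1 ≤ K := by
    have := Finset.mem_Icc.1 hk
    omega
  rw [Finset.card_erase_of_mem hk] at h3
  simp only [Nat.card_Icc, Nat.add_sub_cancel, Nat.cast_sub hK, Nat.cast_one] at h3
  unfold h
  linarith

/-- The answers reveal `W k`, and given `W k` the answers of servers on opposite sides of the edge
`k` are independent, so each adds its full conditional entropy to the download. -/
lemma IsValid.download_bound (hS : S.IsValid I P) {k l r : ℕ} (hk : k ∈ Finset.Icc 1 K)
    (hl : l ∈ Finset.Icc 1 N) (hr : r ∈ Finset.Icc 1 N)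
    (hIl : I l ⊆ Finset.Icc 1 k) (hIr : I r ⊆ Finset.Icc k K) :
    L + S.h l k k + S.h r k k ≤ S.D k := by
  obtain ⟨hk1, hkK⟩ := Finset.mem_Icc.1 hk
  set Z : Set PVar := qs N K with hZ
  set U : Set PVar := PVar.W '' (Finset.Icc 1 k : Finset ℕ) ∪ Z with hU
  set V : Set PVar := PVar.W '' (Finset.Icc k K : Finset ℕ) ∪ Z with hV
  set C : Set PVar := {PVar.W k} ∪ Z with hC
  have hCU : C ⊆ U := Set.union_subset_union_left _
    (Set.singleton_subset_iff.2 ⟨k, by simp [hk1], rfl⟩)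
  have hCV : C ⊆ V := Set.union_subset_union_left _
    (Set.singleton_subset_iff.2 ⟨k, by simp [hkK], rfl⟩)
  have eU : S.F U = k * L + S.F Z := by
    have := hS.f_W (T := Finset.Icc 1 k) (Finset.Icc_subset_Icc le_rfl hkK)
    rwa [Nat.card_Icc, Nat.add_sub_cancel] at this
  have eV : S.F V = (K + 1 - k) * L + S.F Z := by
    have := hS.f_W (T := Finset.Icc k K) (Finset.Icc_subset_Icc hk1 le_rfl)
    rwa [Nat.card_Icc, Nat.cast_sub (by omega), Nat.cast_add, Nat.cast_one] at this
  have eC : S.F C = L + S.F Z := hS.f_W_single hk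
  have eUV : K * L + S.F Z ≤ S.F (U ∪ V) := by
    rw [← hS.f_allW]
    refine S.F_mono ?_
    rintro x (⟨i, hi, rfl⟩ | hx)
    · have hi' := Finset.mem_Icc.1 (Finset.mem_coe.1 hi)
      rcases le_total i k with hik | hik
      · exact Or.inl (Or.inl ⟨i, by simp [hi'.1, hik], rfl⟩)
      · exact Or.inr (Or.inl ⟨i, by simp [hi'.2, hik], rfl⟩)
    · exact Or.inl (Or.inr hx)
  have hX : S.F (U ∪ {.A l k}) = S.F U :=
    hS.det hl hk ((Set.image_mono (Finset.coe_subset.2 hIl)).trans Set.subset_union_left)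
      Set.subset_union_right
  have hY : S.F (V ∪ {.A r k}) = S.F V :=
    hS.det hr hk ((Set.image_mono (Finset.coe_subset.2 hIr)).trans Set.subset_union_left)
      Set.subset_union_right
  have hind : S.F U + S.F V ≤ S.F (U ∪ V) + S.F C := by
    rw [eU, eV, eC]
    linarith
  have hci := S.cond_indep hCU hCV hind hX hY
  have hsub : S.F (C ∪ {.A l k} ∪ {.A r k}) ≤ S.F ((ans N k ∪ Z) ∪ {.W k}) := by
    refine S.F_mono ?_
    rintro x (((rfl | hx) | rfl) | rfl)
    · exact Or.inr rfl
    · exact Or.inl (Or.inr hx)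
    · exact Or.inl (Or.inl ⟨l, hl, rfl⟩)
    · exact Or.inl (Or.inl ⟨r, hr, rfl⟩)
  have hdec := hS.dec hk
  have h1 : S.F (ans N k ∪ Z) ≤ S.F (ans N k) + S.F Z := S.F_subadd subset_rfl
  have h2 := ans_le_D (S := S) k
  have hh : ∀ n, S.h n k k = S.F (C ∪ {.A n k}) - S.F C := by
    intro n
    unfold h f
    congr 2
    ext x
    simp only [hC, hZ, Set.mem_union, Set.mem_insert_iff, Set.mem_singleton_iff]
    tauto
  rw [hh, hh]
  linarith

end PIRScheme

lemma mem_pathIndex {N n k : ℕ} (hn : n ∈ Finset.Icc 1 N) (h : k ∈ pathIndex N n) :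
    1 ≤ k ∧ k ≤ N - 1 ∧ (k = n ∨ k + 1 = n) ∨ N ≤ 1 := by
  have := Finset.mem_Icc.1 hn
  unfold pathIndex at h
  split_ifs at h <;> simp at h <;> omega

/-- **Converse part of Theorem 1** (path graph with modified-edge-server privacy):
for every `N ≥ 4` and every PIR scheme with path-graph storage on `N` servers and
modified-edge-server privacy sets, the total download cost satisfies
`∑_{k=1}^{N-1} D k ≥ (2N - 3) ⬝ L`; equivalently, `R ≤ (N-1)/(2N-3)`. -/
theorem path_modEdge_converse (N : ℕ) (hN : 4 ≤ N) (L : ℝ) (hL : 0 < L)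
    (S : PIRScheme N (N - 1) L)
    (hS : S.IsValid (pathIndex N) (pathModEdgePriv N)) :
    (2 * (N : ℝ) - 3) * L ≤ ∑ k ∈ Finset.Icc 1 (N - 1), S.D k ∧
      S.rate ≤ ((N : ℝ) - 1) / (2 * (N : ℝ) - 3) := by
  have hI : ∀ n ∈ Finset.Icc 1 N, pathIndex N n ⊆ Finset.Icc 1 (N - 1) := by
    intro n hn k hk
    have := mem_pathIndex hn hk
    rw [Finset.mem_Icc]; omega
  have hdec : ∀ k j j', 1 ≤ k → k ≤ N - 1 → 1 ≤ j → j ≤ N - 1 → 1 ≤ j' → j' ≤ N - 1 →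
      j ≠ k → j' ≠ k → L ≤ S.h k k j + S.h (k + 1) k j' := by
    intro k j j' h1 h2 h3 h4 h5 h6 h7 h8
    refine hS.decode_bound (Finset.mem_Icc.2 ⟨h1, h2⟩) hI (fun n hn hk => ?_)
      (Finset.mem_Icc.2 ⟨h3, h4⟩) (Finset.mem_Icc.2 ⟨h5, h6⟩) h7 h8
    have := mem_pathIndex hn hk
    omega
  have hdown : ∀ k l r, 1 ≤ k → k ≤ N - 1 → 1 ≤ l → l ≤ k → k < r → r ≤ N →
      L + S.h l k k + S.h r k k ≤ S.D k := by
    intro k l r h1 h2 h3 h4 h5 h6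
    have hl : l ∈ Finset.Icc 1 N := Finset.mem_Icc.2 ⟨h3, by omega⟩
    have hr : r ∈ Finset.Icc 1 N := Finset.mem_Icc.2 ⟨by omega, h6⟩
    refine hS.download_bound (Finset.mem_Icc.2 ⟨h1, h2⟩) hl hr (fun i hi => ?_) (fun i hi => ?_)
    · have := mem_pathIndex hl hi
      rw [Finset.mem_Icc]; omega
    · have := mem_pathIndex hr hi
      rw [Finset.mem_Icc]; omega
  have hpriv : ∀ n θ1 θ2 k, 1 ≤ n → n ≤ N → θ1 ∈ pathModEdgePriv N n →
      θ2 ∈ pathModEdgePriv N n → 1 ≤ k → k ≤ N - 1 → S.h n θ1 k = S.h n θ2 k :=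
    fun n θ1 θ2 k h1 h2 h3 h4 h5 h6 =>
      hS.h_privacy (Finset.mem_Icc.2 ⟨h1, h2⟩) h3 h4 (Finset.mem_Icc.2 ⟨h5, h6⟩)
  let lam : ℕ → ℝ := fun k => if k = 1 then 0 else if k = 2 then L / 2 else S.h k k k
  let rho : ℕ → ℝ := fun k =>
    if k = N - 1 then 0 else if k = N - 2 then L / 2 else S.h (k + 1) k k
  have hlam : ∀ k, 1 ≤ k → k ≤ N - 1 → ∃ l, 1 ≤ l ∧ l ≤ k ∧ lam k ≤ S.h l k k := by
    intro k h1 h2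
    by_cases hk1 : k = 1
    · exact ⟨k, h1, le_rfl, by simpa [lam, hk1] using S.h_nonneg 1 1 1⟩
    by_cases hk2 : k = 2
    · subst hk2
      have hd := hdec 1 2 2 (by omega) (by omega) (by omega) (by omega) (by omega) (by omega)
        (by omega) (by omega)
      have e1 := hpriv 1 1 2 2 (by omega) (by omega) (by simp [pathModEdgePriv])
        (by simp [pathModEdgePriv]) (by omega) (by omega)
      have e2 := hpriv 2 1 2 2 (by omega) (by omega) (by simp [pathModEdgePriv])
        (by simp [pathModEdgePriv]) (by omega) (by omega)
      norm_num at hd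
      by_cases hc : L / 2 ≤ S.h 1 2 2
      · exact ⟨1, le_rfl, by omega, by simpa [lam] using hc⟩
      · exact ⟨2, by omega, le_rfl, by simp [lam]; linarith⟩
    · exact ⟨k, h1, le_rfl, by simp [lam, hk1, hk2]⟩
  have hrho : ∀ k, 1 ≤ k → k ≤ N - 1 → ∃ r, k < r ∧ r ≤ N ∧ rho k ≤ S.h r k k := by
    intro k h1 h2
    by_cases hk1 : k = N - 1
    · exact ⟨k + 1, by omega, by omega, by simpa [rho, hk1] using S.h_nonneg _ _ _⟩
    by_cases hk2 : k = N - 2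
    · obtain ⟨m, rfl⟩ : ∃ m, N = m + 4 := ⟨N - 4, by omega⟩
      obtain rfl : k = m + 2 := by omega
      have hd := hdec (m + 3) (m + 2) (m + 2) (by omega) (by omega) (by omega) (by omega)
        (by omega) (by omega) (by omega) (by omega)
      have e1 := hpriv (m + 3) (m + 3) (m + 2) (m + 2) (by omega) (by omega)
        (by simp [pathModEdgePriv]) (by simp [pathModEdgePriv]) (by omega) (by omega)
      have e2 := hpriv (m + 4) (m + 3) (m + 2) (m + 2) (by omega) (by omega)
        (by simp [pathModEdgePriv]) (by simp [pathModEdgePriv]) (by omega) (by omega)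
      have e3 : rho (m + 2) = L / 2 := by simp [rho]
      rw [e3]
      by_cases hc : L / 2 ≤ S.h (m + 3) (m + 2) (m + 2)
      · exact ⟨m + 3, by omega, by omega, hc⟩
      · exact ⟨m + 4, by omega, by omega, by linarith⟩
    · exact ⟨k + 1, by omega, by omega, by simp [rho, hk1, hk2]⟩
  have hD : ∀ k ∈ Finset.Icc 1 (N - 1), L + lam k + rho k ≤ S.D k := by
    intro k hk
    obtain ⟨h1, h2⟩ := Finset.mem_Icc.1 hk
    obtain ⟨l, hl1, hl2, hl3⟩ := hlam k h1 h2
    obtain ⟨r, hr1, hr2, hr3⟩ := hrho k h1 h2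
    linarith [hdown k l r h1 h2 hl1 hl2 hr1 hr2]
  have hpair : ∀ k, 2 ≤ k → k ≤ N - 2 → L ≤ rho (k - 1) + lam (k + 1) := by
    intro k h1 h2
    obtain ⟨i, rfl⟩ : ∃ i, k = i + 2 := ⟨k - 2, by omega⟩
    have hd := hdec (i + 2) (i + 1) (i + 3) (by omega) (by omega) (by omega) (by omega)
      (by omega) (by omega) (by omega) (by omega)
    have e1 := hpriv (i + 2) (i + 2) (i + 1) (i + 1) (by omega) (by omega)
      (by unfold pathModEdgePriv; split_ifs <;> simp <;> omega)
      (by unfold pathModEdgePriv; split_ifs <;> simp <;> omega) (by omega) (by omega)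
    have e2 := hpriv (i + 3) (i + 2) (i + 3) (i + 3) (by omega) (by omega)
      (by unfold pathModEdgePriv; split_ifs <;> simp <;> omega)
      (by unfold pathModEdgePriv; split_ifs <;> simp <;> omega) (by omega) (by omega)
    have e3 : rho (i + 1) = S.h (i + 2) (i + 1) (i + 1) := by
      simp only [rho]; rw [if_neg (by omega), if_neg (by omega)]
    have e4 : lam (i + 3) = S.h (i + 3) (i + 3) (i + 3) := by
      simp only [lam]; rw [if_neg (by omega), if_neg (by omega)]
    change L ≤ rho (i + 1) + lam (i + 3)
    rw [e3, e4]
    linarith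
  have hmain : (2 * (N : ℝ) - 3) * L ≤ ∑ k ∈ Finset.Icc 1 (N - 1), S.D k := by
    refine le_trans ?_ (Finset.sum_le_sum hD)
    obtain ⟨m, rfl⟩ : ∃ m, N = m + 4 := ⟨N - 4, by omega⟩
    have hre : ∀ g : ℕ → ℝ, ∑ k ∈ Finset.Icc 1 (m + 4 - 1), g k =
        ∑ i ∈ Finset.range (m + 3), g (i + 1) := by
      intro g
      rw [Finset.range_eq_Ico, Finset.sum_Ico_add' g 0 (m + 3) 1]
      rfl
    rw [hre]
    simp only [Finset.sum_add_distrib]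
    -- The pairing couples `rho` at `j + 1` with `lam` at `j + 3`, so the two boundary terms are
    -- split off at the front for `lam` and at the back for `rho`.
    have s1 : ∑ i ∈ Finset.range (m + 3), lam (i + 1) =
        ∑ j ∈ Finset.range (m + 1), lam (j + 3) + L / 2 := by
      rw [Finset.sum_range_succ', Finset.sum_range_succ']
      simp [lam]
    have s2 : ∑ i ∈ Finset.range (m + 3), rho (i + 1) =
        ∑ j ∈ Finset.range (m + 1), rho (j + 1) + L / 2 := by
      rw [Finset.sum_range_succ, Finset.sum_range_succ]
      simp [rho]
    have s3 : ∑ j ∈ Finset.range (m + 1), L ≤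
        ∑ j ∈ Finset.range (m + 1), (rho (j + 1) + lam (j + 3)) := by
      refine Finset.sum_le_sum fun j hj => ?_
      have := Finset.mem_range.1 hj
      exact hpair (j + 2) (by omega) (by omega)
    rw [Finset.sum_add_distrib] at s3
    rw [s1, s2]
    simp only [Finset.sum_const, Finset.card_range, nsmul_eq_mul] at s3 ⊢
    push_cast at s3 ⊢
    linarith
  refine ⟨hmain, ?_⟩
  have hN' : (4 : ℝ) ≤ N := by exact_mod_cast hN
  have hpos : 0 < (2 * (N : ℝ) - 3) * L := mul_pos (by linarith) hL
  unfold PIRScheme.rate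
  rw [div_le_div_iff₀ (hpos.trans_le hmain) (by linarith), Nat.cast_sub (by omega), Nat.cast_one]
  have := mul_le_mul_of_nonneg_left hmain (show (0 : ℝ) ≤ N - 1 by linarith)
  linarith
end
end

section
/- Download-cost lower bound lemma (inequality (7)–(10) of the paper): for every PIR scheme and every message index k ∈ {1,…,K}, the download cost satisfies D_k ≥ Σ_{n=1}^N H(A_n^{[k]} | 𝒬) ≥ L + I((W_j)_{j≠k} ; A_1^{[k]},…,A_N^{[k]} | W_k, 𝒬). (Only the independence condition (i) and the decodability condition (iv) are needed.) -/
/-!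
The proof uses only Shannon-type inequalities, all of which follow from three facts about `H`:
invariance under relabelling of values (`H_congr`), monotonicity (`H_mono`), and submodularity
`H(X,Y,Z) + H(Z) ≤ H(X,Z) + H(Y,Z)` (`H_submodular`). Submodularity comes from `log t ≤ t - 1`
applied to the ratio `P(x,z) P(y,z) / (P(x,y,z) P(z))`, whose expectation is at most `1`.

Write `A` for the answer vector, `𝒬` for the queries, `W = W_k` and `W'` for the other messages.
Conditioning reduces entropy, so `H(A_n | 𝒬) ≤ H(A_n)`, and subadditivity of conditional entropy
gives `H(A | 𝒬) ≤ ∑ H(A_n | 𝒬)`. It remains to bound `L + I(W'; A | W, 𝒬)` by `H(A | 𝒬)`: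

* decodability gives `H(A, W, 𝒬) = H(A, 𝒬)`;
* monotonicity gives `H(W', W, 𝒬) ≤ H(W', A, W, 𝒬)`, hence
  `I(W'; A | W, 𝒬) ≤ H(A, W, 𝒬) - H(W, 𝒬) = H(A, 𝒬) - H(W, 𝒬)`;
* since `(W', W)` is independent of `𝒬`, submodularity gives `H(W, 𝒬) ≥ H(W) + H(𝒬) = L + H(𝒬)`.
-/

/-!
Formalization of PIR with arbitrary privacy requirement sets.

A PIR scheme with `N` servers and `K` messages of equal length `L > 0` is modeled
by finitely-valued random variables on a common finite probability space:
messages `W 1, …, W K`, and for each server `n ∈ [1:N]` and desired index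
`k ∈ [1:K]`, a query `Q n k` and an answer `A n k`.  Shannon entropy,
conditional entropy and (conditional) mutual information are defined from the
probability mass function `p`.
-/

open scoped Classical BigOperators

noncomputable section

namespace PIRScheme

variable {N K : ℕ} {L : ℝ} (S : PIRScheme N K L)

lemma prob_nonneg {α : Type*} (X : S.Ω → α) (v : α) : 0 ≤ S.prob X v :=
  Finset.sum_nonneg fun ω _ => by
    split_ifs
    exacts [S.p_nonneg ω, le_rfl]

lemma le_prob {α : Type*} (X : S.Ω → α) (ω : S.Ω) : S.p ω ≤ S.prob X (X ω) := by
  have h := Finset.single_le_sum (f := fun ω' => if X ω' = X ω then S.p ω' else 0)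
    (fun ω' _ => by
      split_ifs
      exacts [S.p_nonneg ω', le_rfl]) (Finset.mem_univ ω)
  simpa [prob] using h

/-- Entropy depends only on the partition of the sample space induced by a random variable. -/
lemma H_congr {α β : Type*} (X : S.Ω → α) (Y : S.Ω → β)
    (h : ∀ ω ω', X ω = X ω' ↔ Y ω = Y ω') : S.H X = S.H Y := by
  have hp : ∀ ω, S.prob X (X ω) = S.prob Y (Y ω) := fun ω => by
    unfold prob
    exact Finset.sum_congr rfl fun ω' _ => by simp only [h]
  simp only [H, hp]

/-- If `Y` is a function of `X`, then `H(Y) ≤ H(X)`. -/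
lemma H_mono {α β : Type*} (X : S.Ω → α) (Y : S.Ω → β)
    (h : ∀ ω ω', X ω = X ω' → Y ω = Y ω') : S.H Y ≤ S.H X := by
  unfold H
  refine neg_le_neg (Finset.sum_le_sum fun ω _ => ?_)
  rcases (S.p_nonneg ω).eq_or_lt with h0 | h0
  · simp [← h0]
  refine mul_le_mul_of_nonneg_left (Real.log_le_log (h0.trans_le (S.le_prob X ω)) ?_) h0.le
  refine Finset.sum_le_sum fun ω' _ => ?_
  by_cases hx : X ω' = X ω
  · simp [hx, h _ _ hx]
  · rw [if_neg hx]
    split_ifs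
    exacts [S.p_nonneg ω', le_rfl]

lemma H_const {α : Type*} (c : α) : S.H (fun _ => c) = 0 := by
  simp [H, prob, S.p_sum]

/-- `∑ P(x,z) P(y,z) / P(z) ≤ 1`, the sum being over the triples `(x, y, z)` of positive
probability. Such a sum is encoded over sample points, each triple `v` being weighted by
`∑_{ω ∈ v} p ω / P(v) = 1`. -/
lemma sum_ratio_le_one_s2 {α β γ : Type*} (X : S.Ω → α) (Y : S.Ω → β) (Z : S.Ω → γ) :
    ∑ ω, S.p ω * (S.prob (fun ω => (X ω, Z ω)) (X ω, Z ω) *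
      S.prob (fun ω => (Y ω, Z ω)) (Y ω, Z ω) /
      (S.prob (fun ω => (X ω, Y ω, Z ω)) (X ω, Y ω, Z ω) * S.prob Z (Z ω))) ≤ 1 := by
  set V : S.Ω → α × β × γ := fun ω => (X ω, Y ω, Z ω) with hV
  -- Expanding `P(x,z)` and `P(y,z)` as sums over sample points `a` and `b`.
  have expand : ∀ ω, S.p ω * (S.prob (fun ω => (X ω, Z ω)) (X ω, Z ω) *
      S.prob (fun ω => (Y ω, Z ω)) (Y ω, Z ω) / (S.prob V (X ω, Y ω, Z ω) * S.prob Z (Z ω))) =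
      ∑ a, ∑ b, (if Z b = Z a then S.p a * S.p b / S.prob Z (Z a) else 0) *
        ((if V ω = (X a, Y b, Z a) then S.p ω else 0) / S.prob V (X a, Y b, Z a)) := by
    intro ω
    simp only [prob.eq_1 S (fun ω => (X ω, Z ω)), prob.eq_1 S (fun ω => (Y ω, Z ω))]
    rw [Finset.sum_mul_sum, Finset.sum_div, Finset.mul_sum]
    refine Finset.sum_congr rfl fun a _ => ?_
    rw [Finset.sum_div, Finset.mul_sum]
    refine Finset.sum_congr rfl fun b _ => ?_
    simp only [hV, Prod.mk.injEq, eq_comm (a := X ω) (b := X a), eq_comm (a := Y ω) (b := Y b),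
      eq_comm (a := Z ω) (b := Z a)]
    by_cases h1 : X a = X ω <;> by_cases h2 : Z a = Z ω <;> by_cases h3 : Y b = Y ω <;>
      by_cases h4 : Z b = Z ω <;> simp [h1, h2, h3, h4]
    ring
  rw [Finset.sum_congr rfl fun ω _ => expand ω, Finset.sum_comm]
  calc _ ≤ ∑ a, S.p a := Finset.sum_le_sum fun a _ => ?_
    _ = 1 := S.p_sum
  rw [Finset.sum_comm]
  calc _ ≤ ∑ b, (if Z b = Z a then S.p a * S.p b / S.prob Z (Z a) else 0) :=
        Finset.sum_le_sum fun b _ => ?_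
    _ = S.p a * (S.prob Z (Z a) / S.prob Z (Z a)) := by
        rw [prob.eq_1, Finset.sum_div, Finset.mul_sum]
        refine Finset.sum_congr rfl fun b _ => ?_
        split_ifs
        · rw [mul_div_assoc]
        · simp
    _ ≤ S.p a := mul_le_of_le_one_right (S.p_nonneg a) (div_self_le_one _)
  rw [← Finset.mul_sum, ← Finset.sum_div]
  have hsum : (∑ ω, if V ω = (X a, Y b, Z a) then S.p ω else 0) = S.prob V (X a, Y b, Z a) := by
    unfold prob
    congr!
  rw [hsum]
  refine mul_le_of_le_one_right ?_ (div_self_le_one _)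
  split_ifs
  exacts [div_nonneg (mul_nonneg (S.p_nonneg a) (S.p_nonneg b)) (S.prob_nonneg _ _), le_rfl]

lemma H_submodular {α β γ : Type*} (X : S.Ω → α) (Y : S.Ω → β) (Z : S.Ω → γ) :
    S.H (fun ω => (X ω, Y ω, Z ω)) + S.H Z ≤
      S.H (fun ω => (X ω, Z ω)) + S.H (fun ω => (Y ω, Z ω)) := by
  have key := S.sum_ratio_le_one_s2 X Y Z
  unfold H
  rw [← sub_nonneg]
  have hle : ∀ ω, S.p ω - S.p ω * (S.prob (fun ω => (X ω, Z ω)) (X ω, Z ω) *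
      S.prob (fun ω => (Y ω, Z ω)) (Y ω, Z ω) /
      (S.prob (fun ω => (X ω, Y ω, Z ω)) (X ω, Y ω, Z ω) * S.prob Z (Z ω))) ≤
      S.p ω * Real.log (S.prob (fun ω => (X ω, Y ω, Z ω)) (X ω, Y ω, Z ω)) +
      S.p ω * Real.log (S.prob Z (Z ω)) -
      S.p ω * Real.log (S.prob (fun ω => (X ω, Z ω)) (X ω, Z ω)) -
      S.p ω * Real.log (S.prob (fun ω => (Y ω, Z ω)) (Y ω, Z ω)) := by
    intro ω
    rcases (S.p_nonneg ω).eq_or_lt with h0 | h0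
    · simp [← h0]
    have h1 := h0.trans_le (S.le_prob (fun ω => (X ω, Z ω)) ω)
    have h2 := h0.trans_le (S.le_prob (fun ω => (Y ω, Z ω)) ω)
    have h3 := h0.trans_le (S.le_prob (fun ω => (X ω, Y ω, Z ω)) ω)
    have h4 := h0.trans_le (S.le_prob Z ω)
    have hlog := Real.log_le_sub_one_of_pos (div_pos (mul_pos h1 h2) (mul_pos h3 h4))
    rw [Real.log_div (mul_pos h1 h2).ne' (mul_pos h3 h4).ne', Real.log_mul h1.ne' h2.ne',
      Real.log_mul h3.ne' h4.ne'] at hlog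
    nlinarith [mul_le_mul_of_nonneg_left hlog h0.le]
  have hsum := Finset.sum_le_sum fun ω (_ : ω ∈ Finset.univ) => hle ω
  simp only [Finset.sum_sub_distrib, Finset.sum_add_distrib, S.p_sum] at hsum
  linarith

/-- Conditioning reduces entropy. -/
lemma Hc_le_H {α β : Type*} (X : S.Ω → α) (Y : S.Ω → β) : S.Hc X Y ≤ S.H X := by
  have h := S.H_submodular X Y (fun _ => ())
  rw [S.H_const, S.H_congr (fun ω => (X ω, Y ω, ())) (fun ω => (X ω, Y ω)) (by simp),
    S.H_congr (fun ω => (X ω, ())) X (by simp), S.H_congr (fun ω => (Y ω, ())) Y (by simp)] at h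
  unfold Hc
  linarith

/-- Subadditivity of conditional entropy for a finite family of random variables. -/
lemma Hc_pi_le {α β : Type*} (X : ℕ → S.Ω → α) (Y : S.Ω → β) (T : Finset ℕ) :
    S.Hc (fun ω (n : T) => X n ω) Y ≤ ∑ n ∈ T, S.Hc (X n) Y := by
  induction T using Finset.induction_on with
  | empty =>
    rw [Finset.sum_empty, Hc, S.H_congr _ Y (by simp [funext_iff]), sub_self]
  | insert m T hm ih =>
    rw [Finset.sum_insert hm]
    have h := S.H_submodular (X m) (fun ω (n : T) => X n ω) Y
    rw [S.H_congr (fun ω => (X m ω, (fun (n : T) => X n ω), Y ω))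
      (fun ω => ((fun (n : (insert m T : Finset ℕ)) => X n ω), Y ω))
      (by simp [funext_iff, and_assoc])] at h
    unfold Hc at ih ⊢
    linarith

end PIRScheme

/-- **Download-cost lower bound lemma** (inequalities (7)–(10) of the paper): for
every PIR scheme and every message index `k ∈ [1:K]`,
`D k ≥ ∑_{n=1}^N H(A n k | 𝒬) ≥ L + I((W j)_{j ≠ k} ; A 1 k, …, A N k | W k, 𝒬)`.
Only the independence condition (i) (together with the entropy/independence of the
messages) and the decodability condition (iv) are assumed. -/
theorem download_cost_lower_bound (N K : ℕ) (L : ℝ) (hL : 0 < L)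
    (S : PIRScheme N K L)
    (hent : ∀ i ∈ Finset.Icc 1 K, S.H (S.W i) = L)
    (hindep : S.H S.allW = ∑ i ∈ Finset.Icc 1 K, S.H (S.W i))
    (hquery : S.MI S.allW S.allQ = 0)
    (hdec : ∀ k ∈ Finset.Icc 1 K, S.Hc (S.W k) (fun ω => (S.ansVec k ω, S.allQ ω)) = 0)
    (k : ℕ) (hk : k ∈ Finset.Icc 1 K) :
    ∑ n ∈ Finset.Icc 1 N, S.Hc (S.A n k) S.allQ ≤ S.D k ∧
      L + S.MIc (S.jointW (Finset.Icc 1 K \ {k})) (S.ansVec k)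
          (fun ω => (S.W k ω, S.allQ ω)) ≤
        ∑ n ∈ Finset.Icc 1 N, S.Hc (S.A n k) S.allQ := by
  refine ⟨Finset.sum_le_sum fun n _ => S.Hc_le_H _ _,
    le_trans ?_ (S.Hc_pi_le (fun n => S.A n k) S.allQ (Finset.Icc 1 N))⟩
  change _ ≤ S.Hc (S.ansVec k) S.allQ
  have hdecode := hdec k hk
  have hL := hent k hk
  have split : ∀ ω ω', S.allW ω = S.allW ω' ↔
      S.jointW (Finset.Icc 1 K \ {k}) ω = S.jointW (Finset.Icc 1 K \ {k}) ω' ∧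
        S.W k ω = S.W k ω' := by
    intro ω ω'
    simp only [PIRScheme.allW, PIRScheme.jointW, funext_iff, Subtype.forall, Finset.mem_sdiff,
      Finset.mem_singleton]
    refine ⟨fun h => ⟨fun a ha => h a ha.1, h k hk⟩, fun h a ha => ?_⟩
    by_cases hak : a = k
    · exact hak ▸ h.2
    · exact h.1 a ⟨ha, hak⟩
  have hsub := S.H_submodular (S.jointW (Finset.Icc 1 K \ {k})) S.allQ (S.W k)
  have hmono := S.H_mono
    (fun ω => ((S.jointW (Finset.Icc 1 K \ {k}) ω, S.ansVec k ω), S.W k ω, S.allQ ω))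
    (fun ω => (S.jointW (Finset.Icc 1 K \ {k}) ω, S.W k ω, S.allQ ω))
    (by simp only [Prod.mk.injEq]; tauto)
  have e1 := S.H_congr (fun ω => (S.jointW (Finset.Icc 1 K \ {k}) ω, S.allQ ω, S.W k ω))
    (fun ω => (S.allW ω, S.allQ ω)) (by simp only [Prod.mk.injEq, split]; tauto)
  have e2 := S.H_congr (fun ω => (S.jointW (Finset.Icc 1 K \ {k}) ω, S.W k ω, S.allQ ω))
    (fun ω => (S.allW ω, S.allQ ω)) (by simp only [Prod.mk.injEq, split]; tauto)
  have e3 := S.H_congr (fun ω => (S.jointW (Finset.Icc 1 K \ {k}) ω, S.W k ω)) S.allW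
    (by simp only [Prod.mk.injEq, split]; tauto)
  have e4 := S.H_congr (fun ω => (S.allQ ω, S.W k ω)) (fun ω => (S.W k ω, S.allQ ω))
    (by simp only [Prod.mk.injEq]; tauto)
  have e5 := S.H_congr (fun ω => (S.ansVec k ω, S.W k ω, S.allQ ω))
    (fun ω => (S.W k ω, S.ansVec k ω, S.allQ ω)) (by simp only [Prod.mk.injEq]; tauto)
  unfold PIRScheme.MI at hquery
  unfold PIRScheme.MIc
  unfold PIRScheme.Hc at hdecode ⊢
  linarith
end
end
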